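/- arXiv:2101.03728 — 2 statements merged into one kernel-verified Lean document; each statement's English description precedes it below -/
import Mathlib

section
/- Let λ∈{1,−1}, t∈ℝ, τ∈(0,1/2], N a positive integer, and w∈H¹(𝕋), and let R₅ be defined as in the context. Then ‖R₅‖_{L²} ≤ C τ² √(ln(1/τ)) ‖w‖_{H¹}³, where C is an absolute constant. -/
/-!
Write `b_k = |k| |ŵ_k|`. Since `|e^{ix} - 1| ≤ 2 min(1, |x|)`, the `k`-th coefficient of `R₅` is at
most `4 |λ| τ ∑ min(1/|k|, τ|k₁|) min(τ, 1/|k₂k₃|) b_{-k₁} b_{k₂} b_{k₃}`.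

Group the frequencies as `k - k₁ = l = k₂ + k₃`. Cauchy–Schwarz in `k₂` and then in `k₁` bounds the
`ℓ²` norm of this trilinear expression by `(sup_l α(l) β(l))^{1/2} ‖b‖³`, where
`α(l) = ∑ₖ min(1/|k|, τ|k-l|)²` and `β(l) = ∑ₘ min(τ, 1/|m(l-m)|)²`. With `L = max(|l|, τ^{-1/2})`,
both multipliers are dominated by truncated inverse squares, which gives `α(l) ≲ τL` and
`β(l) ≲ τ/L`. Hence `‖R₅‖_{L²} ≲ τ² ‖w‖³_{H¹}` even without the logarithm, which is bounded
below for `τ ≤ 1/2`.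
-/


noncomputable section

open Complex MeasureTheory
open scoped BigOperators

/-- A function on the torus `𝕋 = (-π,π)` is represented by its sequence of Fourier
coefficients `f̂ : ℤ → ℂ`. -/
abbrev FSeq := ℤ → ℂ

/-- Membership in the Sobolev space `H^s(𝕋)`:
`∑_{k∈ℤ} (1+k²)^s |f̂_k|² < ∞`. -/
def InHs (s : ℝ) (a : FSeq) : Prop :=
  Summable fun k : ℤ => (1 + (k : ℝ) ^ 2) ^ s * ‖a k‖ ^ 2

/-- The `H^s(𝕋)` norm: `‖f‖_{H^s}² = 2π ∑_{k∈ℤ} (1+k²)^s |f̂_k|²`. -/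
def hnorm (s : ℝ) (a : FSeq) : ℝ :=
  Real.sqrt (2 * Real.pi * ∑' k : ℤ, (1 + (k : ℝ) ^ 2) ^ s * ‖a k‖ ^ 2)

/-- The defect term `R₅`. -/
def R5 (lam t τ : ℝ) (N : ℕ) (w : FSeq) : FSeq := fun k =>
  if k ≠ 0 ∧ |k| ≤ (N : ℤ) then
    Complex.I * (lam : ℂ) * ∑' p : ℤ × ℤ,
      (if |k - p.1| ≤ (N : ℤ) then
        (∫ s in (0 : ℝ)..τ, ((p.1 : ℂ) / (k : ℂ)) *
          Complex.exp (Complex.I * (t : ℂ) *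
            ((k : ℂ) ^ 2 + (p.1 : ℂ) ^ 2 - (p.2 : ℂ) ^ 2 - ((k - p.1 - p.2 : ℤ) : ℂ) ^ 2)) *
          (Complex.exp (2 * Complex.I * (s : ℂ) * (k : ℂ) * (p.1 : ℂ)) - 1) *
          (Complex.exp (2 * Complex.I * (s : ℂ) * (p.2 : ℂ) * ((k - p.1 - p.2 : ℤ) : ℂ)) - 1)) *
        (starRingEnd ℂ) (w (-p.1)) * w p.2 * w (k - p.1 - p.2)
      else 0)
  else 0

/-! ### Cauchy–Schwarz and a trilinear estimate -/

lemma ennreal_tsum_mul_sq_le_sq_mul_sq {ι : Type*} (f g : ι → ENNReal) :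
    (∑' i, f i * g i) ^ 2 ≤ (∑' i, f i ^ 2) * ∑' i, g i ^ 2 := by
  let _ : MeasurableSpace ι := ⊤
  have holder := ENNReal.lintegral_mul_le_Lp_mul_Lq Measure.count Real.HolderConjugate.two_two
    (measurable_from_top (f := f)).aemeasurable (measurable_from_top (f := g)).aemeasurable
  simp only [lintegral_count, Pi.mul_apply, ENNReal.rpow_two] at holder
  rwa [← ENNReal.mul_rpow_of_nonneg _ _ (by norm_num), one_div, ENNReal.le_rpow_inv_iff two_pos,
    ENNReal.rpow_two] at holder

lemma tsum_trilinear_sq_le {G : Type*} [AddCommGroup G] (A B : G → G → ENNReal) {M : ENNReal}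
    (hM : ∀ l, (∑' k, A k (k - l) ^ 2) * ∑' m, B m (l - m) ^ 2 ≤ M) (u v w : G → ENNReal) :
    ∑' k, (∑' j, A k j * u j * ∑' m, B m (k - j - m) * (v m * w (k - j - m))) ^ 2 ≤
      M * (∑' j, u j ^ 2) * (∑' m, v m ^ 2) * ∑' n, w n ^ 2 := by
  set α : G → ENNReal := fun l => ∑' k, A k (k - l) ^ 2
  set β : G → ENNReal := fun l => ∑' m, B m (l - m) ^ 2
  set E : G → ENNReal := fun l => ∑' m, B m (l - m) * (v m * w (l - m))
  set D : G → ENNReal := fun l => ∑' m, (v m * w (l - m)) ^ 2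
  have inner (l : G) : E l ^ 2 ≤ β l * D l := ennreal_tsum_mul_sq_le_sq_mul_sq _ _
  have outer (k : G) : (∑' j, A k j * u j * E (k - j)) ^ 2 ≤
      (∑' l, A k (k - l) ^ 2 * E l ^ 2) * ∑' j, u j ^ 2 := by
    have reindex := (Equiv.subLeft k).tsum_eq fun j => A k j ^ 2 * E (k - j) ^ 2
    simp only [Equiv.subLeft_apply, sub_sub_cancel] at reindex
    rw [reindex]
    calc (∑' j, A k j * u j * E (k - j)) ^ 2 = (∑' j, A k j * E (k - j) * u j) ^ 2 := by
          simp only [mul_right_comm]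
      _ ≤ _ := by
          simpa only [mul_pow] using
            ennreal_tsum_mul_sq_le_sq_mul_sq (fun j => A k j * E (k - j)) u
  have tsum_D : ∑' l, D l = (∑' m, v m ^ 2) * ∑' n, w n ^ 2 := by
    have shift (m : G) : ∑' l, w (l - m) ^ 2 = ∑' n, w n ^ 2 :=
      (Equiv.subRight m).tsum_eq fun n => w n ^ 2
    simp only [D, mul_pow]
    rw [ENNReal.tsum_comm]
    simp only [ENNReal.tsum_mul_left, shift, ENNReal.tsum_mul_right]
  calc ∑' k, (∑' j, A k j * u j * E (k - j)) ^ 2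
      ≤ ∑' k, (∑' l, A k (k - l) ^ 2 * E l ^ 2) * ∑' j, u j ^ 2 := ENNReal.tsum_le_tsum outer
    _ = (∑' l, α l * E l ^ 2) * ∑' j, u j ^ 2 := by
        rw [ENNReal.tsum_mul_right, ENNReal.tsum_comm]
        simp only [α, ENNReal.tsum_mul_right]
    _ ≤ (∑' l, M * D l) * ∑' j, u j ^ 2 := by
        refine mul_le_mul' (ENNReal.tsum_le_tsum fun l => ?_) le_rfl
        calc α l * E l ^ 2 ≤ α l * (β l * D l) := by gcongr; exact inner l
          _ = α l * β l * D l := (mul_assoc _ _ _).symm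
          _ ≤ M * D l := by gcongr; exact hM l
    _ = _ := by rw [ENNReal.tsum_mul_left, tsum_D]; ring

/-! ### Truncated inverse squares on the integers -/

/-- The truncated inverse square `min(1, x²/k²)`, the majorant through which sums of squared
multipliers are estimated. Its value at `k = 0` is `0`, because `x ^ 2 / 0 = 0`. -/
def truncInvSq (x : ℝ) (k : ℤ) : ENNReal := ENNReal.ofReal (min 1 (x ^ 2 / (k : ℝ) ^ 2))

lemma truncInvSq_zero (x : ℝ) : truncInvSq x 0 = 0 := by simp [truncInvSq]

lemma truncInvSq_neg (x : ℝ) (k : ℤ) : truncInvSq x (-k) = truncInvSq x k := by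
  simp [truncInvSq]

-- The function `n ↦ 4xn/(x+n)` increases from `0` to `4x`, so its increments sum to at most `4x`.
lemma min_one_sq_div_sq_le_sub {x : ℝ} (hx : 0 < x) (n : ℕ) :
    min 1 (x ^ 2 / ((n : ℝ) + 1) ^ 2) ≤
      4 * x * (n + 1 : ℕ) / (x + (n + 1 : ℕ)) - 4 * x * n / (x + n) := by
  have increment : 4 * x * (n + 1 : ℕ) / (x + (n + 1 : ℕ)) - 4 * x * n / (x + n)
      = 4 * x ^ 2 / ((x + n) * (x + n + 1)) := by
    push_cast
    field_simp
    ring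
  rw [increment]
  rcases le_total ((n : ℝ) + 1) x with h | h
  · refine (min_le_left _ _).trans ?_
    rw [le_div_iff₀ (by positivity)]
    nlinarith
  · refine (min_le_right _ _).trans ?_
    rw [div_le_div_iff₀ (by positivity) (by positivity)]
    have : (x + n) * (x + n + 1) ≤ 4 * ((n : ℝ) + 1) ^ 2 := by nlinarith
    nlinarith [sq_nonneg x]

lemma tsum_nat_truncInvSq_le {x : ℝ} (hx : 0 < x) :
    ∑' n : ℕ, truncInvSq x (n + 1) ≤ ENNReal.ofReal (4 * x) := by
  rw [ENNReal.tsum_eq_iSup_nat]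
  refine iSup_le fun n => ?_
  simp only [truncInvSq]
  rw [← ENNReal.ofReal_sum_of_nonneg fun i _ => by positivity]
  refine ENNReal.ofReal_le_ofReal ?_
  calc ∑ i ∈ Finset.range n, min 1 (x ^ 2 / (((i : ℤ) + 1 : ℤ) : ℝ) ^ 2)
      ≤ ∑ i ∈ Finset.range n,
          (4 * x * (i + 1 : ℕ) / (x + (i + 1 : ℕ)) - 4 * x * i / (x + i)) := by
        gcongr with i
        exact_mod_cast min_one_sq_div_sq_le_sub hx i
    _ = 4 * x * n / (x + n) := by
        rw [Finset.sum_range_sub fun i : ℕ => 4 * x * i / (x + i)]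
        simp
    _ ≤ 4 * x := by
        rw [div_le_iff₀ (by positivity)]
        nlinarith

lemma tsum_truncInvSq_le {x : ℝ} (hx : 0 < x) :
    ∑' k : ℤ, truncInvSq x k ≤ ENNReal.ofReal (8 * x) := by
  calc ∑' k : ℤ, truncInvSq x k
      = ∑' n : ℕ, truncInvSq x (n + 1) + ∑' n : ℕ, truncInvSq x (n + 1) := by
        rw [tsum_of_nat_of_neg_add_one ENNReal.summable ENNReal.summable,
          tsum_eq_zero_add' ENNReal.summable]
        simp only [truncInvSq_neg, Nat.cast_zero, truncInvSq_zero, zero_add, Nat.cast_add,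
          Nat.cast_one]
    _ ≤ ENNReal.ofReal (4 * x) + ENNReal.ofReal (4 * x) := by
        gcongr <;> exact tsum_nat_truncInvSq_le hx
    _ = ENNReal.ofReal (8 * x) := by
        rw [← ENNReal.ofReal_add (by positivity) (by positivity)]
        ring_nf

lemma ofReal_sq_le_mul_truncInvSq {a x y : ℝ} {k : ℤ} (hy : 0 ≤ y) (hk : k ≠ 0) (hya : y ≤ a)
    (hyk : y * |(k : ℝ)| ≤ a * x) :
    ENNReal.ofReal y ^ 2 ≤ ENNReal.ofReal (a ^ 2) * truncInvSq x k := by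
  rw [truncInvSq, ← ENNReal.ofReal_pow hy, ← ENNReal.ofReal_mul (by positivity)]
  refine ENNReal.ofReal_le_ofReal ?_
  rw [mul_min_of_nonneg _ _ (by positivity), mul_one]
  refine le_min (by gcongr) ?_
  rw [← mul_div_assoc, le_div_iff₀ (by positivity), ← sq_abs (k : ℝ), ← mul_pow, ← mul_pow]
  gcongr

/-! ### The two multipliers and their square sums -/

/-- The multiplier `min(1/|k|, τ|j|)` produced by the outer frequency `k` and the frequency
`j = k₁` of the conjugated factor. Its value at `k = 0` is `0`, because `1 / 0 = 0`. -/
def outerMultiplier (τ : ℝ) (k j : ℤ) : ENNReal :=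
  ENNReal.ofReal (min (1 / |(k : ℝ)|) (τ * |(j : ℝ)|))

/-- The multiplier `min(τ, 1/|mn|)` produced by the frequencies `m = k₂` and `n = k₃`. Its value
for `mn = 0` is `0`, because `1 / 0 = 0`. -/
def innerMultiplier (τ : ℝ) (m n : ℤ) : ENNReal :=
  ENNReal.ofReal (min τ (1 / (|(m : ℝ)| * |(n : ℝ)|)))

lemma innerMultiplier_comm (τ : ℝ) (m n : ℤ) : innerMultiplier τ m n = innerMultiplier τ n m := by
  rw [innerMultiplier, innerMultiplier, mul_comm |(m : ℝ)|]

section SquareSums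

variable {τ L : ℝ} (hτ : 0 < τ) (hL : 0 < L)
include hτ hL

lemma outerMultiplier_sq_le {k l : ℤ} (hlL : |(l : ℝ)| ≤ L) (hτL : 1 ≤ τ * L ^ 2) :
    outerMultiplier τ k (k - l) ^ 2 ≤
      ENNReal.ofReal ((2 * τ * L) ^ 2) * truncInvSq (1 / (2 * τ * L)) k := by
  rcases eq_or_ne k 0 with rfl | hk
  · have : 0 ≤ τ * |(l : ℝ)| := by positivity
    simp [outerMultiplier, this]
  refine ofReal_sq_le_mul_truncInvSq (by positivity) hk ?_ ?_
  · rcases le_total |(k : ℝ)| L with hkL | hLk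
    · calc _ ≤ τ * |((k - l : ℤ) : ℝ)| := min_le_right _ _
        _ ≤ τ * (|(k : ℝ)| + |(l : ℝ)|) := by push_cast; gcongr; exact abs_sub _ _
        _ ≤ τ * (L + L) := by gcongr
        _ = 2 * τ * L := by ring
    · calc _ ≤ 1 / |(k : ℝ)| := min_le_left _ _
        _ ≤ 1 / L := by gcongr
        _ ≤ 2 * τ * L := by rw [div_le_iff₀ hL]; nlinarith
  · calc _ ≤ 1 / |(k : ℝ)| * |(k : ℝ)| := by gcongr; exact min_le_left _ _
      _ = 2 * τ * L * (1 / (2 * τ * L)) := by field_simp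

lemma tsum_outerMultiplier_sq_le {l : ℤ} (hlL : |(l : ℝ)| ≤ L) (hτL : 1 ≤ τ * L ^ 2) :
    ∑' k, outerMultiplier τ k (k - l) ^ 2 ≤ ENNReal.ofReal (16 * τ * L) := by
  calc ∑' k, outerMultiplier τ k (k - l) ^ 2
      ≤ ∑' k, ENNReal.ofReal ((2 * τ * L) ^ 2) * truncInvSq (1 / (2 * τ * L)) k :=
        ENNReal.tsum_le_tsum fun k => outerMultiplier_sq_le hτ hL hlL hτL
    _ ≤ ENNReal.ofReal ((2 * τ * L) ^ 2) * ENNReal.ofReal (8 * (1 / (2 * τ * L))) := by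
        rw [ENNReal.tsum_mul_left]
        gcongr
        exact tsum_truncInvSq_le (by positivity)
    _ = ENNReal.ofReal (16 * τ * L) := by
        rw [← ENNReal.ofReal_mul (by positivity)]
        congr 1
        field_simp
        ring

lemma innerMultiplier_sq_le_of_abs_le {m n : ℤ} (hmn : |(m : ℝ)| ≤ |(n : ℝ)|)
    (h : L ≤ 2 * |(n : ℝ)| ∨ τ * L ^ 2 ≤ 1) :
    innerMultiplier τ m n ^ 2 ≤ ENNReal.ofReal (τ ^ 2) * truncInvSq (2 / (τ * L)) m := by
  rcases eq_or_ne m 0 with rfl | hm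
  · simp [innerMultiplier, hτ.le]
  have hm' : 0 < |(m : ℝ)| := by positivity
  have hn' : 0 < |(n : ℝ)| := hm'.trans_le hmn
  refine ofReal_sq_le_mul_truncInvSq (by positivity) hm (min_le_left _ _) ?_
  have hx : τ * (2 / (τ * L)) = 2 / L := by field_simp
  rw [hx, le_div_iff₀ hL]
  rcases le_or_gt L (2 * |(n : ℝ)|) with hLn | hnL
  · calc _ ≤ 1 / (|(m : ℝ)| * |(n : ℝ)|) * |(m : ℝ)| * (2 * |(n : ℝ)|) := by
          gcongr; exact min_le_right _ _
      _ = 2 := by field_simp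
  · have hτL := h.resolve_left hnL.not_ge
    calc _ ≤ τ * (L / 2) * L := by gcongr; exacts [min_le_left _ _, by linarith]
      _ ≤ 2 := by nlinarith

lemma innerMultiplier_sq_le {l m n : ℤ} (hl : m + n = l) (h : L ≤ |(l : ℝ)| ∨ τ * L ^ 2 ≤ 1) :
    innerMultiplier τ m n ^ 2 ≤
      ENNReal.ofReal (τ ^ 2) * (truncInvSq (2 / (τ * L)) m + truncInvSq (2 / (τ * L)) n) := by
  have hsum : |(l : ℝ)| ≤ |(m : ℝ)| + |(n : ℝ)| := by
    rw [← hl, Int.cast_add]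
    exact abs_add_le _ _
  rcases le_total |(m : ℝ)| |(n : ℝ)| with hmn | hnm
  · refine (innerMultiplier_sq_le_of_abs_le hτ hL hmn (h.imp_left fun _ => by linarith)).trans ?_
    gcongr
    exact le_self_add
  · rw [innerMultiplier_comm]
    refine (innerMultiplier_sq_le_of_abs_le hτ hL hnm (h.imp_left fun _ => by linarith)).trans ?_
    gcongr
    exact le_add_self

lemma tsum_innerMultiplier_sq_le {l : ℤ} (h : L ≤ |(l : ℝ)| ∨ τ * L ^ 2 ≤ 1) :
    ∑' m, innerMultiplier τ m (l - m) ^ 2 ≤ ENNReal.ofReal (32 * τ / L) := by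
  have reflect : ∑' m, truncInvSq (2 / (τ * L)) (l - m) = ∑' m, truncInvSq (2 / (τ * L)) m :=
    (Equiv.subLeft l).tsum_eq fun m => truncInvSq (2 / (τ * L)) m
  calc ∑' m, innerMultiplier τ m (l - m) ^ 2
      ≤ ∑' m, ENNReal.ofReal (τ ^ 2) *
          (truncInvSq (2 / (τ * L)) m + truncInvSq (2 / (τ * L)) (l - m)) :=
        ENNReal.tsum_le_tsum fun m => innerMultiplier_sq_le hτ hL (add_sub_cancel m l) h
    _ ≤ ENNReal.ofReal (τ ^ 2) *
          (ENNReal.ofReal (8 * (2 / (τ * L))) + ENNReal.ofReal (8 * (2 / (τ * L)))) := by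
        rw [ENNReal.tsum_mul_left, ENNReal.tsum_add, reflect]
        gcongr <;> exact tsum_truncInvSq_le (by positivity)
    _ = ENNReal.ofReal (32 * τ / L) := by
        rw [← ENNReal.ofReal_add (by positivity) (by positivity),
          ← ENNReal.ofReal_mul (by positivity)]
        congr 1
        field_simp
        ring

end SquareSums

lemma tsum_outerMultiplier_sq_mul_tsum_innerMultiplier_sq_le {τ : ℝ} (hτ : 0 ≤ τ) (l : ℤ) :
    (∑' k, outerMultiplier τ k (k - l) ^ 2) * ∑' m, innerMultiplier τ m (l - m) ^ 2 ≤
      ENNReal.ofReal (512 * τ ^ 2) := by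
  rcases hτ.eq_or_lt with rfl | hτ
  · simp [outerMultiplier]
  set L : ℝ := max |(l : ℝ)| (1 / √τ)
  have hL : 0 < L := lt_max_of_lt_right (by positivity)
  have hcrit : τ * (1 / √τ) ^ 2 = 1 := by
    rw [div_pow, Real.sq_sqrt hτ.le]
    field_simp
  have hτL : 1 ≤ τ * L ^ 2 := by
    rw [← hcrit]
    gcongr
    exact le_max_right _ _
  have hLl : L ≤ |(l : ℝ)| ∨ τ * L ^ 2 ≤ 1 := by
    rcases max_choice |(l : ℝ)| (1 / √τ) with h | h
    · exact .inl h.le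
    · exact .inr (by rw [← hcrit, ← h])
  calc _ ≤ ENNReal.ofReal (16 * τ * L) * ENNReal.ofReal (32 * τ / L) :=
        mul_le_mul' (tsum_outerMultiplier_sq_le hτ hL (le_max_left _ _) hτL)
          (tsum_innerMultiplier_sq_le hτ hL hLl)
    _ = ENNReal.ofReal (512 * τ ^ 2) := by
        rw [← ENNReal.ofReal_mul (by positivity)]
        congr 1
        field_simp
        ring

/-! ### The coefficients of `R₅` -/

/-- The time integral multiplying the product of coefficients in `R5`, with `j = k₁`, `m = k₂` and
`n = k₃`. -/
def phaseIntegral (t τ : ℝ) (k j m n : ℤ) : ℂ :=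
  ∫ s in (0 : ℝ)..τ, ((j : ℂ) / (k : ℂ)) *
    Complex.exp (Complex.I * (t : ℂ) *
      ((k : ℂ) ^ 2 + (j : ℂ) ^ 2 - (m : ℂ) ^ 2 - (n : ℂ) ^ 2)) *
    (Complex.exp (2 * Complex.I * (s : ℂ) * (k : ℂ) * (j : ℂ)) - 1) *
    (Complex.exp (2 * Complex.I * (s : ℂ) * (m : ℂ) * (n : ℂ)) - 1)

/-- The modulus `|k| |ŵ_k|` of the `k`-th Fourier coefficient of the derivative of `w`. -/
def derivENorm (w : FSeq) (k : ℤ) : ENNReal := ‖(k : ℂ) * w k‖ₑ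

lemma norm_exp_two_I_mul_sub_one_le {s τ : ℝ} (hs : |s| ≤ |τ|) (a b : ℤ) :
    ‖Complex.exp (2 * Complex.I * (s : ℂ) * (a : ℂ) * (b : ℂ)) - 1‖ ≤
      2 * min 1 (|τ| * (|(a : ℝ)| * |(b : ℝ)|)) := by
  have harg : 2 * Complex.I * (s : ℂ) * (a : ℂ) * (b : ℂ)
      = Complex.I * ((2 * s * (a * b) : ℝ) : ℂ) := by
    push_cast
    ring
  rw [harg, mul_min_of_nonneg _ _ zero_le_two]
  refine le_min ?_ (Real.norm_exp_I_mul_ofReal_sub_one_le.trans ?_)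
  · calc _ ≤ ‖Complex.exp (Complex.I * ((2 * s * (a * b) : ℝ) : ℂ))‖ + ‖(1 : ℂ)‖ :=
          norm_sub_le _ _
      _ = 2 * 1 := by rw [mul_comm, Complex.norm_exp_ofReal_mul_I, norm_one]; norm_num
  · rw [Real.norm_eq_abs, abs_mul, abs_mul, abs_mul, abs_two, mul_assoc]
    gcongr

lemma min_one_mul_eq_mul_min {x : ℝ} (hx : 0 ≤ x) (τ : ℝ) : min 1 (τ * x) = x * min τ (1 / x) := by
  rcases hx.eq_or_lt with rfl | hx
  · simp
  · rw [mul_min_of_nonneg _ _ hx.le, mul_one_div_cancel hx.ne', min_comm, mul_comm]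

lemma norm_phaseIntegral_le (t τ : ℝ) {k : ℤ} (hk : k ≠ 0) (j m n : ℤ) :
    ‖phaseIntegral t τ k j m n‖ ≤
      4 * |τ| * (min (1 / |(k : ℝ)|) (|τ| * |(j : ℝ)|) * |(j : ℝ)|) *
        (min |τ| (1 / (|(m : ℝ)| * |(n : ℝ)|)) * (|(m : ℝ)| * |(n : ℝ)|)) := by
  have hphase := Complex.norm_exp_I_mul_ofReal
    (t * ((k : ℝ) ^ 2 + (j : ℝ) ^ 2 - (m : ℝ) ^ 2 - (n : ℝ) ^ 2))
  push_cast at hphase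
  rw [← mul_assoc] at hphase
  have houter : |(j : ℝ)| / |(k : ℝ)| * min 1 (|τ| * (|(k : ℝ)| * |(j : ℝ)|))
      = min (1 / |(k : ℝ)|) (|τ| * |(j : ℝ)|) * |(j : ℝ)| := by
    rw [mul_min_of_nonneg _ _ (by positivity), min_mul_of_nonneg _ _ (by positivity)]
    congr 1 <;> field_simp
  have hinner := min_one_mul_eq_mul_min (x := |(m : ℝ)| * |(n : ℝ)|) (by positivity) |τ|
  refine (intervalIntegral.norm_integral_le_of_norm_le_const
    (C := |(j : ℝ)| / |(k : ℝ)| * (2 * min 1 (|τ| * (|(k : ℝ)| * |(j : ℝ)|))) *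
      (2 * min 1 (|τ| * (|(m : ℝ)| * |(n : ℝ)|)))) fun s hs => ?_).trans_eq ?_
  · have hs' : |s| ≤ |τ| := by
      simpa using Set.abs_sub_left_of_mem_uIcc (Set.uIoc_subset_uIcc hs)
    rw [norm_mul, norm_mul, norm_mul, hphase, mul_one, norm_div, Complex.norm_intCast,
      Complex.norm_intCast]
    gcongr
    exacts [norm_exp_two_I_mul_sub_one_le hs' k j, norm_exp_two_I_mul_sub_one_le hs' m n]
  · rw [← houter, hinner, sub_zero]
    ring

lemma enorm_phaseIntegral_le (t τ : ℝ) {k : ℤ} (hk : k ≠ 0) (j m n : ℤ) :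
    ‖phaseIntegral t τ k j m n‖ₑ ≤ ENNReal.ofReal (4 * |τ|) *
      (outerMultiplier |τ| k j * ‖(j : ℂ)‖ₑ) *
        (innerMultiplier |τ| m n * (‖(m : ℂ)‖ₑ * ‖(n : ℂ)‖ₑ)) := by
  simp only [outerMultiplier, innerMultiplier, ← ofReal_norm, Complex.norm_intCast]
  repeat rw [← ENNReal.ofReal_mul (by positivity)]
  exact ENNReal.ofReal_le_ofReal (norm_phaseIntegral_le t τ hk j m n)

lemma enorm_R5_le (lam t τ : ℝ) (N : ℕ) (w : FSeq) (k : ℤ) :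
    ‖R5 lam t τ N w k‖ₑ ≤ ENNReal.ofReal (4 * |lam| * |τ|) *
      ∑' j, outerMultiplier |τ| k j * derivENorm w (-j) *
        ∑' m, innerMultiplier |τ| m (k - j - m) * (derivENorm w m * derivENorm w (k - j - m)) := by
  rw [R5]
  split_ifs with hk
  swap
  · simp
  have hlam : ‖Complex.I * (lam : ℂ)‖ₑ = ENNReal.ofReal |lam| := by
    rw [← ofReal_norm, norm_mul, Complex.norm_I, one_mul, Complex.norm_real, Real.norm_eq_abs]
  have hconst : ENNReal.ofReal (4 * |lam| * |τ|)
      = ENNReal.ofReal |lam| * ENNReal.ofReal (4 * |τ|) := by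
    rw [← ENNReal.ofReal_mul (abs_nonneg _)]
    ring_nf
  rw [enorm_mul, hlam, hconst, mul_assoc]
  gcongr
  refine enorm_tsum_le_tsum_enorm.trans ?_
  simp only [← ENNReal.tsum_mul_left]
  rw [ENNReal.tsum_prod']
  refine ENNReal.tsum_le_tsum fun j => ENNReal.tsum_le_tsum fun m => ?_
  split_ifs
  swap
  · simp
  calc ‖phaseIntegral t τ k j m (k - j - m) * (starRingEnd ℂ) (w (-j)) * w m * w (k - j - m)‖ₑ
      = ‖phaseIntegral t τ k j m (k - j - m)‖ₑ *
          (‖w (-j)‖ₑ * ‖w m‖ₑ * ‖w (k - j - m)‖ₑ) := by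
        rw [enorm_mul, enorm_mul, enorm_mul, RCLike.enorm_conj]
        ring
    _ ≤ ENNReal.ofReal (4 * |τ|) * (outerMultiplier |τ| k j * ‖(j : ℂ)‖ₑ) *
          (innerMultiplier |τ| m (k - j - m) * (‖(m : ℂ)‖ₑ * ‖((k - j - m : ℤ) : ℂ)‖ₑ)) *
            (‖w (-j)‖ₑ * ‖w m‖ₑ * ‖w (k - j - m)‖ₑ) := by
        gcongr
        exact enorm_phaseIntegral_le t τ hk.1 j m _
    _ = _ := by
        simp only [derivENorm, enorm_mul, Int.cast_neg, enorm_neg]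
        ring

lemma tsum_enorm_R5_sq_le (lam t τ : ℝ) (N : ℕ) (w : FSeq) :
    ∑' k, ‖R5 lam t τ N w k‖ₑ ^ 2 ≤
      ENNReal.ofReal (8192 * lam ^ 2 * τ ^ 4) * (∑' k, derivENorm w k ^ 2) ^ 3 := by
  have reflect : ∑' j, derivENorm w (-j) ^ 2 = ∑' j, derivENorm w j ^ 2 :=
    (Equiv.neg ℤ).tsum_eq fun j => derivENorm w j ^ 2
  have trilinear := tsum_trilinear_sq_le (outerMultiplier |τ|) (innerMultiplier |τ|)
    (tsum_outerMultiplier_sq_mul_tsum_innerMultiplier_sq_le (abs_nonneg τ))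
    (fun j => derivENorm w (-j)) (derivENorm w) (derivENorm w)
  rw [reflect] at trilinear
  calc ∑' k, ‖R5 lam t τ N w k‖ₑ ^ 2
      ≤ ENNReal.ofReal (4 * |lam| * |τ|) ^ 2 * _ := by
        rw [← ENNReal.tsum_mul_left]
        simp only [← mul_pow]
        gcongr with k
        exact enorm_R5_le lam t τ N w k
    _ ≤ _ := mul_le_mul_right trilinear _
    _ = ENNReal.ofReal (4 * |lam| * |τ|) ^ 2 * ENNReal.ofReal (512 * |τ| ^ 2) *
          (∑' k, derivENorm w k ^ 2) ^ 3 := by ring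
    _ = _ := by
        rw [← ENNReal.ofReal_pow (by positivity), ← ENNReal.ofReal_mul (by positivity)]
        congr 2
        rw [mul_pow, mul_pow, sq_abs, sq_abs]
        ring

/-! ### Sobolev norms -/

lemma hnorm_nonneg (s : ℝ) (a : FSeq) : 0 ≤ hnorm s a := Real.sqrt_nonneg _

lemma hnorm_sq (s : ℝ) (a : FSeq) :
    hnorm s a ^ 2 = 2 * Real.pi * ∑' k : ℤ, (1 + (k : ℝ) ^ 2) ^ s * ‖a k‖ ^ 2 :=
  Real.sq_sqrt (mul_nonneg Real.two_pi_pos.le (tsum_nonneg fun k => by positivity))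

lemma hnorm_zero_sq (a : FSeq) : hnorm 0 a ^ 2 = 2 * Real.pi * (∑' k, ‖a k‖ₑ ^ 2).toReal := by
  rw [hnorm_sq, ENNReal.tsum_toReal_eq fun k => by finiteness]
  simp

lemma tsum_derivENorm_sq_le {w : FSeq} (hw : InHs 1 w) :
    ∑' k, derivENorm w k ^ 2 ≤ ENNReal.ofReal (hnorm 1 w ^ 2 / (2 * Real.pi)) := by
  rw [hnorm_sq, mul_div_cancel_left₀ _ Real.two_pi_pos.ne',
    ENNReal.ofReal_tsum_of_nonneg (fun k => by positivity) hw]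
  gcongr with k
  rw [derivENorm, ← ofReal_norm, ← ENNReal.ofReal_pow (norm_nonneg _), norm_mul,
    Complex.norm_intCast, mul_pow, sq_abs, Real.rpow_one]
  gcongr
  linarith

theorem R5_L2_bound_general (lam t τ : ℝ) (N : ℕ) {w : FSeq} (hw : InHs 1 w) :
    hnorm 0 (R5 lam t τ N w) ≤ 16 * |lam| * τ ^ 2 * hnorm 1 w ^ 3 := by
  have hH := hnorm_nonneg 1 w
  have hsum : (∑' k, ‖R5 lam t τ N w k‖ₑ ^ 2).toReal ≤
      8192 * lam ^ 2 * τ ^ 4 * (hnorm 1 w ^ 2 / (2 * Real.pi)) ^ 3 := by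
    refine ENNReal.toReal_le_of_le_ofReal (by positivity) ?_
    rw [ENNReal.ofReal_mul (by positivity), ENNReal.ofReal_pow (by positivity)]
    refine (tsum_enorm_R5_sq_le lam t τ N w).trans ?_
    gcongr
    exact tsum_derivENorm_sq_le hw
  refine le_of_sq_le_sq ?_ (by positivity)
  calc hnorm 0 (R5 lam t τ N w) ^ 2
      ≤ 2 * Real.pi * (8192 * lam ^ 2 * τ ^ 4 * (hnorm 1 w ^ 2 / (2 * Real.pi)) ^ 3) := by
        rw [hnorm_zero_sq]
        gcongr
    _ = 2048 / Real.pi ^ 2 * (lam ^ 2 * τ ^ 4 * hnorm 1 w ^ 6) := by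
        field_simp
        ring
    _ ≤ 16 ^ 2 * (lam ^ 2 * τ ^ 4 * hnorm 1 w ^ 6) := by
        gcongr
        rw [div_le_iff₀ (by positivity)]
        nlinarith [Real.pi_gt_three]
    _ = (16 * |lam| * τ ^ 2 * hnorm 1 w ^ 3) ^ 2 := by
        rw [← sq_abs lam]
        ring

lemma half_le_sqrt_log_one_div {τ : ℝ} (hτ : 0 < τ) (hτ' : τ ≤ 1 / 2) :
    1 / 2 ≤ √(Real.log (1 / τ)) := by
  refine Real.le_sqrt_of_sq_le ?_
  calc (1 / 2 : ℝ) ^ 2 ≤ Real.log 2 := by linarith [Real.log_two_gt_d9]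
    _ ≤ Real.log (1 / τ) := by
        refine Real.log_le_log two_pos ?_
        rw [le_div_iff₀ hτ]
        linarith

theorem R5_L2_bound :
    ∃ C : ℝ, 0 < C ∧ ∀ lam : ℝ, (lam = 1 ∨ lam = -1) → ∀ t τ : ℝ, 0 < τ → τ ≤ 1 / 2 →
      ∀ N : ℕ, 0 < N → ∀ w : FSeq, InHs 1 w →
      hnorm 0 (R5 lam t τ N w) ≤ C * τ ^ 2 * Real.sqrt (Real.log (1 / τ)) * hnorm 1 w ^ 3 := by
  refine ⟨32, by norm_num, fun lam hlam t τ hτ hτ' N _ w hw => ?_⟩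
  have hlam' : |lam| = 1 := by rcases hlam with rfl | rfl <;> simp
  have hH := hnorm_nonneg 1 w
  calc hnorm 0 (R5 lam t τ N w) ≤ 16 * |lam| * τ ^ 2 * hnorm 1 w ^ 3 :=
        R5_L2_bound_general lam t τ N hw
    _ = 32 * τ ^ 2 * (1 / 2) * hnorm 1 w ^ 3 := by rw [hlam']; ring
    _ ≤ 32 * τ ^ 2 * √(Real.log (1 / τ)) * hnorm 1 w ^ 3 := by
        gcongr
        exact half_le_sqrt_log_one_div hτ hτ'

end
end

section
/- There is an absolute constant C such that for every real K≥2, every v∈H¹(𝕋) and every f∈L²(𝕋): ∑_{0<|k|≤K} [ ∑_{k₁+k₂+k₃=k, |k₂|≥|k₃|, |k₃|≤|k|} |k|^{−1}|k₁||k₂||k₃| |v̂_{k₁}||v̂_{k₂}||v̂_{k₃}| + ∑_{k₁+k₂+k₃=k, |k₂|≥|k₃|, |k₃|>|k|} |k₁||k₂| |v̂_{k₁}||v̂_{k₂}||v̂_{k₃}| ] |f̂_k| ≤ C √(ln K) ‖v‖_{H¹}³ ‖f‖_{L²}. -/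
/-! The two regimes `|k₃| ≤ |k|` and `|k| < |k₃|` are one: with `x_k = |k| |v̂_k|`, which is square
summable, both summands are at most `x_{k₁} x_{k₂} x_{k₃} / max(|k|, |k₃|)`. For fixed `k` and `k₃`,
Cauchy–Schwarz bounds the sum of `x_{k₁} x_{k₂}` over `k₁ + k₂ = k - k₃` by `∑ x²`, and
`∑_j max(|k|, |j|)⁻² = O(|k|⁻¹)`, so by Cauchy–Schwarz in `k₃` the inner sums are
`O(|k|^{-1/2}) (∑ x²)^{3/2}`. A last Cauchy–Schwarz against `|f̂_k|` leaves
`(∑_{0<|k|≤K} |k|⁻¹)^{1/2} = O(√(ln K))`. -/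

noncomputable section

open Complex MeasureTheory
open scoped BigOperators

section CauchySchwarz

variable {ι : Type*} {f g : ι → ℝ}

lemma summable_mul_of_summable_sq (hf : Summable fun i => f i ^ 2)
    (hg : Summable fun i => g i ^ 2) : Summable fun i => f i * g i :=
  (hf.add hg).of_norm_bounded fun i => by
    rw [Real.norm_eq_abs, abs_le]
    constructor <;> nlinarith [sq_nonneg (f i + g i), sq_nonneg (f i - g i)]

lemma tsum_mul_le_sqrt_mul_sqrt (hf : Summable fun i => f i ^ 2)
    (hg : Summable fun i => g i ^ 2) :
    ∑' i, f i * g i ≤ √(∑' i, f i ^ 2) * √(∑' i, g i ^ 2) :=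
  (summable_mul_of_summable_sq hf hg).tsum_le_of_sum_le fun s =>
    (Real.sum_mul_le_sqrt_mul_sqrt s f g).trans <| by
      gcongr
      · exact hf.sum_le_tsum s fun _ _ => sq_nonneg _
      · exact hg.sum_le_tsum s fun _ _ => sq_nonneg _

end CauchySchwarz

lemma tsum_add_tsum_le_of_add_le {ι : Type*} {f g h : ι → ℝ} (hf : ∀ i, 0 ≤ f i)
    (hg : ∀ i, 0 ≤ g i) (hfg : ∀ i, f i + g i ≤ h i) (hh : Summable h) :
    ∑' i, f i + ∑' i, g i ≤ ∑' i, h i := by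
  have hfs : Summable f := hh.of_nonneg_of_le hf fun i => by linarith [hg i, hfg i]
  have hgs : Summable g := hh.of_nonneg_of_le hg fun i => by linarith [hf i, hfg i]
  rw [← hfs.tsum_add hgs]
  exact (hfs.add hgs).tsum_le_tsum hfg hh

section Convolution

variable {G : Type*} [AddCommGroup G] {a b w : G → ℝ}

lemma hasSum_mul_sub_sub (ha₀ : ∀ x, 0 ≤ a x) (hw₀ : ∀ x, 0 ≤ w x) (ha : Summable a)
    (hw : Summable w) (k : G) :
    HasSum (fun p : G × G => a p.1 * w (k - p.1 - p.2)) ((∑' x, a x) * ∑' x, w x) :=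
  (Equiv.prodShear (Equiv.refl G) fun x => Equiv.subLeft (k - x)).hasSum_iff.mpr <|
    ha.hasSum.mul hw.hasSum (ha.mul_of_nonneg hw ha₀ hw₀)

lemma hasSum_sq_mul_sqrt_fst (hw₀ : ∀ x, 0 ≤ w x) (ha : Summable fun x => a x ^ 2)
    (hw : Summable w) (k : G) :
    HasSum (fun p : G × G => (a p.1 * √(w (k - p.1 - p.2))) ^ 2)
      ((∑' x, a x ^ 2) * ∑' x, w x) := by
  simpa only [mul_pow, Real.sq_sqrt (hw₀ _)] using
    hasSum_mul_sub_sub (fun x => sq_nonneg (a x)) hw₀ ha hw k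

lemma hasSum_sq_mul_sqrt_snd (hw₀ : ∀ x, 0 ≤ w x) (ha : Summable fun x => a x ^ 2)
    (hw : Summable w) (k : G) :
    HasSum (fun p : G × G => (a p.2 * √(w (k - p.1 - p.2))) ^ 2)
      ((∑' x, a x ^ 2) * ∑' x, w x) := by
  simpa only [Function.comp_def, Equiv.prodComm_apply, Prod.fst_swap, Prod.snd_swap,
    sub_right_comm k] using
    (Equiv.prodComm G G).hasSum_iff.mpr (hasSum_sq_mul_sqrt_fst hw₀ ha hw k)

lemma mul_mul_eq_mul_sqrt_mul_mul_sqrt {x y z : ℝ} (hz : 0 ≤ z) :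
    x * y * z = (x * √z) * (y * √z) := by
  rw [mul_mul_mul_comm, Real.mul_self_sqrt hz]

lemma summable_mul_mul_sub_sub (hw₀ : ∀ x, 0 ≤ w x) (ha : Summable fun x => a x ^ 2)
    (hb : Summable fun x => b x ^ 2) (hw : Summable w) (k : G) :
    Summable fun p : G × G => a p.1 * b p.2 * w (k - p.1 - p.2) := by
  simp only [mul_mul_eq_mul_sqrt_mul_mul_sqrt (hw₀ _)]
  exact summable_mul_of_summable_sq (hasSum_sq_mul_sqrt_fst hw₀ ha hw k).summable
    (hasSum_sq_mul_sqrt_snd hw₀ hb hw k).summable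

lemma tsum_mul_mul_sub_sub_le (hw₀ : ∀ x, 0 ≤ w x) (ha : Summable fun x => a x ^ 2)
    (hb : Summable fun x => b x ^ 2) (hw : Summable w) (k : G) :
    ∑' p : G × G, a p.1 * b p.2 * w (k - p.1 - p.2) ≤
      √(∑' x, a x ^ 2) * √(∑' x, b x ^ 2) * ∑' x, w x := by
  have hfst := hasSum_sq_mul_sqrt_fst hw₀ ha hw k
  have hsnd := hasSum_sq_mul_sqrt_snd hw₀ hb hw k
  have hW : 0 ≤ ∑' x, w x := tsum_nonneg hw₀
  calc ∑' p : G × G, a p.1 * b p.2 * w (k - p.1 - p.2)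
      = ∑' p : G × G, (a p.1 * √(w (k - p.1 - p.2))) * (b p.2 * √(w (k - p.1 - p.2))) := by
        simp only [mul_mul_eq_mul_sqrt_mul_mul_sqrt (hw₀ _)]
    _ ≤ √((∑' x, a x ^ 2) * ∑' x, w x) * √((∑' x, b x ^ 2) * ∑' x, w x) := by
        rw [← hfst.tsum_eq, ← hsnd.tsum_eq]
        exact tsum_mul_le_sqrt_mul_sqrt hfst.summable hsnd.summable
    _ = √(∑' x, a x ^ 2) * √(∑' x, b x ^ 2) * ∑' x, w x := by
        rw [Real.sqrt_mul' _ hW, Real.sqrt_mul' _ hW, ← mul_mul_eq_mul_sqrt_mul_mul_sqrt hW]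

end Convolution

section IntegerSums

lemma sum_comp_natAbs_le {M : Type*} [AddCommMonoid M] [PartialOrder M] [IsOrderedAddMonoid M]
    {g : ℕ → M} (hg : ∀ m, 0 ≤ g m) {s : Finset ℤ} {t : Finset ℕ}
    (hst : ∀ j ∈ s, j.natAbs ∈ t) : ∑ j ∈ s, g j.natAbs ≤ 2 • ∑ m ∈ t, g m := by
  rw [← Finset.sum_fiberwise_of_maps_to hst, Finset.smul_sum]
  refine Finset.sum_le_sum fun m _ => ?_
  have hsub : {j ∈ s | j.natAbs = m} ⊆ {(m : ℤ), -(m : ℤ)} := by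
    intro j hj
    simp only [Finset.mem_filter, Finset.mem_insert, Finset.mem_singleton] at hj ⊢
    omega
  calc ∑ j ∈ s with j.natAbs = m, g j.natAbs
      = ∑ j ∈ s with j.natAbs = m, g m :=
        Finset.sum_congr rfl fun j hj => by rw [(Finset.mem_filter.mp hj).2]
    _ = {j ∈ s | j.natAbs = m}.card • g m := Finset.sum_const _
    _ ≤ 2 • g m :=
        nsmul_le_nsmul_left (hg m) ((Finset.card_le_card hsub).trans Finset.card_le_two)

lemma abs_intCast_eq_natAbs (j : ℤ) : |(j : ℝ)| = j.natAbs := by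
  rw [Nat.cast_natAbs, Int.cast_abs]

/-- The nonzero integer frequencies `k` with `|k| ≤ K`. -/
def nonzeroFreqs (K : ℝ) : Finset ℤ := (Finset.Icc (-⌊K⌋) ⌊K⌋).erase 0

lemma mem_nonzeroFreqs {K : ℝ} {k : ℤ} : k ∈ nonzeroFreqs K ↔ k ≠ 0 ∧ |(k : ℝ)| ≤ K := by
  rw [nonzeroFreqs, Finset.mem_erase, Finset.mem_Icc, ← abs_le, Int.le_floor, Int.cast_abs]

lemma tsum_ite_eq_sum_nonzeroFreqs (K : ℝ) (F : ℤ → ℝ) :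
    ∑' k : ℤ, (if k ≠ 0 ∧ |(k : ℝ)| ≤ K then F k else 0) = ∑ k ∈ nonzeroFreqs K, F k := by
  simp only [← mem_nonzeroFreqs]
  rw [tsum_eq_sum fun k hk => if_neg hk]
  exact Finset.sum_congr rfl fun k hk => if_pos hk

lemma sum_nonzeroFreqs_inv_abs_le {K : ℝ} (hK : 2 ≤ K) :
    ∑ k ∈ nonzeroFreqs K, |(k : ℝ)|⁻¹ ≤ 6 * Real.log K := by
  have hmem : ∀ k ∈ nonzeroFreqs K, k.natAbs ∈ Finset.Icc 1 ⌊K⌋₊ := by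
    intro k hk
    rw [mem_nonzeroFreqs, abs_intCast_eq_natAbs] at hk
    exact Finset.mem_Icc.mpr ⟨Int.natAbs_pos.mpr hk.1, Nat.le_floor hk.2⟩
  have hharm : ∑ m ∈ Finset.Icc 1 ⌊K⌋₊, (m : ℝ)⁻¹ ≤ 1 + Real.log K := by
    simpa [harmonic_eq_sum_Icc] using harmonic_floor_le_one_add_log K (by linarith)
  have hlog : 1 / 2 ≤ Real.log K := by
    linarith [Real.log_two_gt_d9, Real.log_le_log two_pos hK]
  calc ∑ k ∈ nonzeroFreqs K, |(k : ℝ)|⁻¹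
      = ∑ k ∈ nonzeroFreqs K, (k.natAbs : ℝ)⁻¹ := by simp only [abs_intCast_eq_natAbs]
    _ ≤ 2 • ∑ m ∈ Finset.Icc 1 ⌊K⌋₊, (m : ℝ)⁻¹ :=
        sum_comp_natAbs_le (g := fun m => (m : ℝ)⁻¹) (fun m => by positivity) hmem
    _ ≤ 6 * Real.log K := by rw [nsmul_eq_mul]; push_cast; linarith

lemma sum_nonzeroFreqs_sqrt_inv_abs_mul_le {K : ℝ} (hK : 2 ≤ K) {x : ℤ → ℝ}
    (hx : Summable fun k => x k ^ 2) :
    ∑ k ∈ nonzeroFreqs K, √(|(k : ℝ)|⁻¹) * x k ≤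
      √(6 * Real.log K) * √(∑' k, x k ^ 2) := by
  refine (Real.sum_mul_le_sqrt_mul_sqrt _ _ _).trans ?_
  simp only [Real.sq_sqrt (inv_nonneg.mpr (abs_nonneg _))]
  gcongr
  · exact sum_nonzeroFreqs_inv_abs_le hK
  · exact hx.sum_le_tsum _ fun _ _ => sq_nonneg _

end IntegerSums

section MaxKernel

/-- The kernel `1 / max(|k|, |j|)`, which dominates the multipliers of both regimes `|j| ≤ |k|` and
`|k| < |j|` once a factor `|j|` has been absorbed into the sequence. -/
def maxKernel (k j : ℤ) : ℝ := (max |(k : ℝ)| |(j : ℝ)|)⁻¹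

lemma maxKernel_nonneg (k j : ℤ) : 0 ≤ maxKernel k j :=
  inv_nonneg.mpr (le_max_of_le_left (abs_nonneg _))

lemma maxKernel_of_le {k j : ℤ} (h : |j| ≤ |k|) : maxKernel k j = |(k : ℝ)|⁻¹ := by
  rw [maxKernel, max_eq_left (by exact_mod_cast h)]

lemma maxKernel_of_ge {k j : ℤ} (h : |k| ≤ |j|) : maxKernel k j = |(j : ℝ)|⁻¹ := by
  rw [maxKernel, max_eq_right (by exact_mod_cast h)]

lemma sum_range_inv_max_sq_le {n : ℕ} (hn : n ≠ 0) (N : ℕ) :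
    ∑ m ∈ Finset.range N, (max (n : ℝ) m)⁻¹ ^ 2 ≤ 4 / n := by
  have hn₁ : (1 : ℝ) ≤ n := by exact_mod_cast Nat.one_le_iff_ne_zero.mpr hn
  have hlow : ∑ m ∈ Finset.range (n + 1), (max (n : ℝ) m)⁻¹ ^ 2 ≤ 2 / n := by
    calc ∑ m ∈ Finset.range (n + 1), (max (n : ℝ) m)⁻¹ ^ 2
        ≤ ∑ _m ∈ Finset.range (n + 1), (n : ℝ)⁻¹ ^ 2 := by
          gcongr
          exact le_max_left _ _
      _ = (n + 1) * (n : ℝ)⁻¹ ^ 2 := by simp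
      _ ≤ (2 * n) * (n : ℝ)⁻¹ ^ 2 := by gcongr; linarith
      _ = 2 / n := by field_simp
  have hhigh : ∑ m ∈ Finset.Ioo n N, (max (n : ℝ) m)⁻¹ ^ 2 ≤ 2 / n := by
    calc ∑ m ∈ Finset.Ioo n N, (max (n : ℝ) m)⁻¹ ^ 2
        ≤ ∑ m ∈ Finset.Ioo n N, ((m : ℝ) ^ 2)⁻¹ := by
          refine Finset.sum_le_sum fun m hm => ?_
          rw [max_eq_right (by exact_mod_cast (Finset.mem_Ioo.mp hm).1.le), inv_pow]
      _ ≤ 2 / (n + 1) := sum_Ioo_inv_sq_le n N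
      _ ≤ 2 / n := by gcongr; linarith
  calc ∑ m ∈ Finset.range N, (max (n : ℝ) m)⁻¹ ^ 2
      ≤ ∑ m ∈ Finset.range (n + 1) ∪ Finset.Ioo n N, (max (n : ℝ) m)⁻¹ ^ 2 := by
        refine Finset.sum_le_sum_of_subset_of_nonneg (fun m hm => ?_) fun _ _ _ => sq_nonneg _
        simp only [Finset.mem_union, Finset.mem_range, Finset.mem_Ioo] at hm ⊢
        omega
    _ = ∑ m ∈ Finset.range (n + 1), (max (n : ℝ) m)⁻¹ ^ 2 +
          ∑ m ∈ Finset.Ioo n N, (max (n : ℝ) m)⁻¹ ^ 2 :=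
        Finset.sum_union <| Finset.disjoint_left.mpr fun m hm hm' => by
          simp only [Finset.mem_range, Finset.mem_Ioo] at hm hm'
          omega
    _ ≤ 2 / n + 2 / n := add_le_add hlow hhigh
    _ = 4 / n := by ring

variable {k : ℤ}

lemma sum_maxKernel_sq_le (hk : k ≠ 0) (s : Finset ℤ) :
    ∑ j ∈ s, maxKernel k j ^ 2 ≤ 8 * |(k : ℝ)|⁻¹ := by
  have hmem : ∀ j ∈ s, j.natAbs ∈ Finset.range (s.sup Int.natAbs + 1) := fun j hj =>
    Finset.mem_range_succ_iff.mpr (Finset.le_sup hj)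
  calc ∑ j ∈ s, maxKernel k j ^ 2
      = ∑ j ∈ s, (max (k.natAbs : ℝ) j.natAbs)⁻¹ ^ 2 := by
        simp only [maxKernel, abs_intCast_eq_natAbs]
    _ ≤ 2 • ∑ m ∈ Finset.range (s.sup Int.natAbs + 1), (max (k.natAbs : ℝ) m)⁻¹ ^ 2 :=
        sum_comp_natAbs_le (g := fun m => (max (k.natAbs : ℝ) m)⁻¹ ^ 2)
          (fun _ => sq_nonneg _) hmem
    _ ≤ 2 • (4 / (k.natAbs : ℝ)) := by
        gcongr
        exact sum_range_inv_max_sq_le (Int.natAbs_ne_zero.mpr hk) _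
    _ = 8 * |(k : ℝ)|⁻¹ := by rw [abs_intCast_eq_natAbs, nsmul_eq_mul]; push_cast; ring

lemma summable_maxKernel_sq (hk : k ≠ 0) : Summable fun j => maxKernel k j ^ 2 :=
  summable_of_sum_le (fun _ => sq_nonneg _) (sum_maxKernel_sq_le hk)

lemma tsum_maxKernel_sq_le (hk : k ≠ 0) : ∑' j, maxKernel k j ^ 2 ≤ 8 * |(k : ℝ)|⁻¹ :=
  (summable_maxKernel_sq hk).tsum_le_of_sum_le (sum_maxKernel_sq_le hk)

variable {x y z : ℤ → ℝ}

lemma summable_mul_mul_maxKernel (hk : k ≠ 0) (hz₀ : ∀ j, 0 ≤ z j)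
    (hx : Summable fun j => x j ^ 2) (hy : Summable fun j => y j ^ 2)
    (hz : Summable fun j => z j ^ 2) :
    Summable fun p : ℤ × ℤ =>
      x p.1 * y p.2 * (z (k - p.1 - p.2) * maxKernel k (k - p.1 - p.2)) :=
  summable_mul_mul_sub_sub (w := fun j => z j * maxKernel k j)
    (fun j => mul_nonneg (hz₀ j) (maxKernel_nonneg k j)) hx hy
    (summable_mul_of_summable_sq hz (summable_maxKernel_sq hk)) k

lemma tsum_mul_mul_maxKernel_le (hk : k ≠ 0) (hz₀ : ∀ j, 0 ≤ z j)
    (hx : Summable fun j => x j ^ 2) (hy : Summable fun j => y j ^ 2)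
    (hz : Summable fun j => z j ^ 2) :
    ∑' p : ℤ × ℤ, x p.1 * y p.2 * (z (k - p.1 - p.2) * maxKernel k (k - p.1 - p.2)) ≤
      √(∑' j, x j ^ 2) * √(∑' j, y j ^ 2) * (√(∑' j, z j ^ 2) * √(8 * |(k : ℝ)|⁻¹)) := by
  have hker := summable_maxKernel_sq hk
  refine (tsum_mul_mul_sub_sub_le (w := fun j => z j * maxKernel k j)
    (fun j => mul_nonneg (hz₀ j) (maxKernel_nonneg k j)) hx hy
    (summable_mul_of_summable_sq hz hker) k).trans ?_
  gcongr
  refine (tsum_mul_le_sqrt_mul_sqrt hz hker).trans ?_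
  gcongr
  exact tsum_maxKernel_sq_le hk

end MaxKernel

section Sobolev

lemma InHs.summable_sq_of_le {s : ℝ} {a : FSeq} (ha : InHs s a) {x : ℤ → ℝ}
    (hx : ∀ k, x k ^ 2 ≤ (1 + (k : ℝ) ^ 2) ^ s * ‖a k‖ ^ 2) : Summable fun k => x k ^ 2 :=
  Summable.of_nonneg_of_le (fun _ => sq_nonneg _) hx ha

lemma InHs.sqrt_tsum_sq_le_hnorm {s : ℝ} {a : FSeq} (ha : InHs s a) {x : ℤ → ℝ}
    (hx : ∀ k, x k ^ 2 ≤ (1 + (k : ℝ) ^ 2) ^ s * ‖a k‖ ^ 2) :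
    √(∑' k, x k ^ 2) ≤ hnorm s a := by
  refine Real.sqrt_le_sqrt (((ha.summable_sq_of_le hx).tsum_le_tsum hx ha).trans ?_)
  exact le_mul_of_one_le_left (tsum_nonneg fun k => by positivity)
    (by linarith [Real.pi_gt_three])

/-- The sequence `|k| |v̂_k|` of absolute Fourier coefficients of the derivative of `v`. -/
def derivAbs (v : FSeq) (k : ℤ) : ℝ := |(k : ℝ)| * ‖v k‖

lemma derivAbs_nonneg (v : FSeq) (k : ℤ) : 0 ≤ derivAbs v k := by
  unfold derivAbs; positivity

lemma derivAbs_sq_le (v : FSeq) (k : ℤ) :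
    derivAbs v k ^ 2 ≤ (1 + (k : ℝ) ^ 2) ^ (1 : ℝ) * ‖v k‖ ^ 2 := by
  rw [derivAbs, mul_pow, sq_abs, Real.rpow_one]
  gcongr
  linarith

lemma norm_sq_le_rpow_zero_mul_norm_sq (f : FSeq) (k : ℤ) :
    ‖f k‖ ^ 2 ≤ (1 + (k : ℝ) ^ 2) ^ (0 : ℝ) * ‖f k‖ ^ 2 := by
  rw [Real.rpow_zero, one_mul]

end Sobolev

section InteractionSums

variable (P : ℤ × ℤ → Prop) [DecidablePred P] (u v w : FSeq) (k : ℤ)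

/-- The sum of `|k|⁻¹ |k₁| |k₂| |k₃| |û_{k₁}| |v̂_{k₂}| |ŵ_{k₃}|` over the interactions
`k₁ + k₂ + k₃ = k` with `|k₃| ≤ |k|` that satisfy `P`. They are parametrized by `p = (k₁, k₂)`. -/
def lowInteractionSum : ℝ :=
  ∑' p : ℤ × ℤ, if P p ∧ |k - p.1 - p.2| ≤ |k| then
    (|(k : ℝ)|)⁻¹ * |(p.1 : ℝ)| * |(p.2 : ℝ)| * |((k - p.1 - p.2 : ℤ) : ℝ)| *
      (‖u p.1‖ * ‖v p.2‖ * ‖w (k - p.1 - p.2)‖) else 0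

/-- The sum of `|k₁| |k₂| |û_{k₁}| |v̂_{k₂}| |ŵ_{k₃}|` over the interactions `k₁ + k₂ + k₃ = k` with
`|k₃| > |k|` that satisfy `P`, with the parametrization of `lowInteractionSum`. -/
def highInteractionSum : ℝ :=
  ∑' p : ℤ × ℤ, if P p ∧ |k| < |k - p.1 - p.2| then
    |(p.1 : ℝ)| * |(p.2 : ℝ)| * (‖u p.1‖ * ‖v p.2‖ * ‖w (k - p.1 - p.2)‖) else 0

variable {k} in
lemma lowInteractionSum_add_highInteractionSum_le_tsum (hk : k ≠ 0)
    (hu : InHs 1 u) (hv : InHs 1 v) (hw : InHs 1 w) :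
    lowInteractionSum P u v w k + highInteractionSum P u v w k ≤
      ∑' p : ℤ × ℤ, derivAbs u p.1 * derivAbs v p.2 *
        (derivAbs w (k - p.1 - p.2) * maxKernel k (k - p.1 - p.2)) := by
  refine tsum_add_tsum_le_of_add_le (fun p => by split_ifs <;> positivity)
    (fun p => by split_ifs <;> positivity) (fun p => ?_)
    (summable_mul_mul_maxKernel hk (derivAbs_nonneg w) (hu.summable_sq_of_le (derivAbs_sq_le u))
      (hv.summable_sq_of_le (derivAbs_sq_le v)) (hw.summable_sq_of_le (derivAbs_sq_le w)))
  by_cases hP : P p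
  · rcases le_or_gt |k - p.1 - p.2| |k| with hlow | hhigh
    · simp only [hP, hlow, hlow.not_gt, maxKernel_of_le hlow, derivAbs, and_self, and_false,
        if_true, if_false]
      apply le_of_eq
      ring
    · have hpos : (0 : ℝ) < |((k - p.1 - p.2 : ℤ) : ℝ)| := by
        exact_mod_cast (abs_nonneg k).trans_lt hhigh
      simp only [hP, hhigh, hhigh.not_ge, maxKernel_of_ge hhigh.le, derivAbs, and_self, and_false,
        if_true, if_false]
      apply le_of_eq
      field_simp
      ring
  · simp only [hP, false_and, if_false, add_zero]
    exact mul_nonneg (mul_nonneg (derivAbs_nonneg u _) (derivAbs_nonneg v _))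
      (mul_nonneg (derivAbs_nonneg w _) (maxKernel_nonneg _ _))

variable {u v w k} in
lemma lowInteractionSum_add_highInteractionSum_le (hk : k ≠ 0)
    (hu : InHs 1 u) (hv : InHs 1 v) (hw : InHs 1 w) :
    lowInteractionSum P u v w k + highInteractionSum P u v w k ≤
      √8 * (hnorm 1 u * hnorm 1 v * hnorm 1 w) * √(|(k : ℝ)|⁻¹) := by
  have hu' := hu.sqrt_tsum_sq_le_hnorm (derivAbs_sq_le u)
  have hv' := hv.sqrt_tsum_sq_le_hnorm (derivAbs_sq_le v)
  have hw' := hw.sqrt_tsum_sq_le_hnorm (derivAbs_sq_le w)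
  have hu₀ := hnorm_nonneg 1 u
  have hv₀ := hnorm_nonneg 1 v
  calc lowInteractionSum P u v w k + highInteractionSum P u v w k
      ≤ √(∑' j, derivAbs u j ^ 2) * √(∑' j, derivAbs v j ^ 2) *
          (√(∑' j, derivAbs w j ^ 2) * √(8 * |(k : ℝ)|⁻¹)) :=
        (lowInteractionSum_add_highInteractionSum_le_tsum P u v w hk hu hv hw).trans <|
          tsum_mul_mul_maxKernel_le hk (derivAbs_nonneg w)
            (hu.summable_sq_of_le (derivAbs_sq_le u)) (hv.summable_sq_of_le (derivAbs_sq_le v))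
            (hw.summable_sq_of_le (derivAbs_sq_le w))
    _ ≤ hnorm 1 u * hnorm 1 v * (hnorm 1 w * √(8 * |(k : ℝ)|⁻¹)) := by gcongr
    _ = √8 * (hnorm 1 u * hnorm 1 v * hnorm 1 w) * √(|(k : ℝ)|⁻¹) := by
        rw [Real.sqrt_mul (by norm_num)]
        ring

end InteractionSums

theorem log_sum_bound_general :
    ∃ C : ℝ, 0 < C ∧ ∀ K : ℝ, 2 ≤ K → ∀ (P : ℤ → ℤ × ℤ → Prop) [∀ k, DecidablePred (P k)]
      (u v w f : FSeq), InHs 1 u → InHs 1 v → InHs 1 w → InHs 0 f →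
      ∑' k : ℤ, (if k ≠ 0 ∧ |(k : ℝ)| ≤ K then
        (lowInteractionSum (P k) u v w k + highInteractionSum (P k) u v w k) * ‖f k‖ else 0)
      ≤ C * √(Real.log K) * (hnorm 1 u * hnorm 1 v * hnorm 1 w) * hnorm 0 f := by
  refine ⟨√8 * √6, by positivity, fun K hK P _ u v w f hu hv hw hf => ?_⟩
  set N := hnorm 1 u * hnorm 1 v * hnorm 1 w
  have hN : 0 ≤ N :=
    mul_nonneg (mul_nonneg (hnorm_nonneg 1 u) (hnorm_nonneg 1 v)) (hnorm_nonneg 1 w)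
  rw [tsum_ite_eq_sum_nonzeroFreqs]
  calc ∑ k ∈ nonzeroFreqs K,
        (lowInteractionSum (P k) u v w k + highInteractionSum (P k) u v w k) * ‖f k‖
      ≤ ∑ k ∈ nonzeroFreqs K, √8 * N * √(|(k : ℝ)|⁻¹) * ‖f k‖ := by
        gcongr with k hk
        exact lowInteractionSum_add_highInteractionSum_le (P k) (mem_nonzeroFreqs.mp hk).1 hu hv hw
    _ = √8 * N * ∑ k ∈ nonzeroFreqs K, √(|(k : ℝ)|⁻¹) * ‖f k‖ := by
        simp only [Finset.mul_sum, mul_assoc]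
    _ ≤ √8 * N * (√(6 * Real.log K) * √(∑' k, ‖f k‖ ^ 2)) := by
        gcongr
        exact sum_nonzeroFreqs_sqrt_inv_abs_mul_le hK
          (hf.summable_sq_of_le (norm_sq_le_rpow_zero_mul_norm_sq f))
    _ ≤ √8 * N * (√(6 * Real.log K) * hnorm 0 f) := by
        gcongr
        exact hf.sqrt_tsum_sq_le_hnorm (norm_sq_le_rpow_zero_mul_norm_sq f)
    _ = √8 * √6 * √(Real.log K) * N * hnorm 0 f := by
        rw [Real.sqrt_mul (by norm_num)]
        ring

theorem log_sum_bound :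
    ∃ C : ℝ, 0 < C ∧ ∀ K : ℝ, 2 ≤ K → ∀ v f : FSeq, InHs 1 v → InHs 0 f →
      ∑' k : ℤ, (if k ≠ 0 ∧ |(k : ℝ)| ≤ K then
        ((∑' p : ℤ × ℤ, if |k - p.1 - p.2| ≤ |p.2| ∧ |k - p.1 - p.2| ≤ |k| then
            (|(k : ℝ)|)⁻¹ * |(p.1 : ℝ)| * |(p.2 : ℝ)| * |((k - p.1 - p.2 : ℤ) : ℝ)| *
              (‖v p.1‖ * ‖v p.2‖ * ‖v (k - p.1 - p.2)‖) else 0)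
          + ∑' p : ℤ × ℤ, if |k - p.1 - p.2| ≤ |p.2| ∧ |k| < |k - p.1 - p.2| then
            |(p.1 : ℝ)| * |(p.2 : ℝ)| *
              (‖v p.1‖ * ‖v p.2‖ * ‖v (k - p.1 - p.2)‖) else 0) * ‖f k‖
        else 0)
      ≤ C * Real.sqrt (Real.log K) * hnorm 1 v ^ 3 * hnorm 0 f := by
  obtain ⟨C, hC, h⟩ := log_sum_bound_general
  exact ⟨C, hC, fun K hK v f hv hf =>
    (h K hK (fun k p => |k - p.1 - p.2| ≤ |p.2|) v v v f hv hv hv hf).trans_eq (by ring)⟩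

end
end
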